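/- Splitting of stable models over disjoint vocabularies: if programs Π₁ and Π₂ share no atoms, then I is a stable model of Π₁ ∪ Π₂ if and only if I ∩ A₁ is a stable model of Π₁ and I ∩ A₂ is a stable model of Π₂ and I ⊆ A₁ ∪ A₂, where Aᵢ is the set of atoms occurring in Πᵢ. -/

import Mathlib

/-- A ground normal rule: head atom, positive body atoms, negative body atoms. -/
structure Rule (α : Type*) where
  head : α
  pos : Set α
  neg : Set α

/-- Classical satisfaction of a rule by an interpretation. -/
def satRule {α : Type*} (I : Set α) (r : Rule α) : Prop :=
  (r.pos ⊆ I ∧ Disjoint r.neg I) → r.head ∈ I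

/-- Classical satisfaction of a program. -/
def satProg {α : Type*} (I : Set α) (P : Set (Rule α)) : Prop :=
  ∀ r ∈ P, satRule I r

/-- The (Gelfond–Lifschitz) reduct of a program w.r.t. an interpretation. -/
def reduct {α : Type*} (P : Set (Rule α)) (I : Set α) : Set (Rule α) :=
  {r' | ∃ r ∈ P, Disjoint r.neg I ∧ r' = ⟨r.head, r.pos, ∅⟩}

/-- ⟨H,T⟩ is a here-and-there model of P. -/
def isHT {α : Type*} (P : Set (Rule α)) (H T : Set α) : Prop :=
  H ⊆ T ∧ satProg T P ∧ satProg H (reduct P T)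

/-- I is a stable model of P. -/
def stable {α : Type*} (P : Set (Rule α)) (I : Set α) : Prop :=
  satProg I P ∧ ∀ J, J ⊂ I → ¬ satProg J (reduct P I)

/-- Atom a occurs in rule r. -/
def occursIn {α : Type*} (a : α) (r : Rule α) : Prop :=
  a = r.head ∨ a ∈ r.pos ∨ a ∈ r.neg

/-- The set of atoms occurring in a program. -/
def atomsOf {α : Type*} (P : Set (Rule α)) : Set α :=
  {a | ∃ r ∈ P, occursIn a r}

/-! Stability of `I` means minimality of `I` among the models of the reduct of `P` by `I`, and both
the reduct and its models only see atoms of `P`. Given a stable model `I` of `P ∪ Q` and a smaller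
model `J ⊆ I ∩ atomsOf P` of the reduct of `P`, the set `J ∪ (I \ atomsOf P)` is still a model of
the reduct of `Q`, because no rule of `Q` derives an atom of `P`; minimality of `I` then gives
`J = I ∩ atomsOf P`. Conversely, a model of the reduct of `P ∪ Q` below `I` is cut down to each
vocabulary and compared with `I` there. -/

section Models

variable {α : Type*} {P Q : Set (Rule α)} {I J A : Set α}

theorem image_head_subset_atomsOf : Rule.head '' P ⊆ atomsOf P := by
  rintro _ ⟨r, hr, rfl⟩
  exact ⟨r, hr, Or.inl rfl⟩

theorem pos_subset_atomsOf {r : Rule α} (hr : r ∈ P) : r.pos ⊆ atomsOf P :=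
  fun _ ha => ⟨r, hr, Or.inr (Or.inl ha)⟩

theorem neg_subset_atomsOf {r : Rule α} (hr : r ∈ P) : r.neg ⊆ atomsOf P :=
  fun _ ha => ⟨r, hr, Or.inr (Or.inr ha)⟩

theorem satProg_union : satProg I (P ∪ Q) ↔ satProg I P ∧ satProg I Q := by
  simp only [satProg, Set.mem_union, or_imp, forall_and]

theorem reduct_union : reduct (P ∪ Q) I = reduct P I ∪ reduct Q I := by
  ext r
  simp only [reduct, Set.mem_union, Set.mem_ofPred_eq, or_and_right, exists_or]

theorem satProg_reduct_iff :
    satProg J (reduct P I) ↔ ∀ r ∈ P, Disjoint r.neg I → r.pos ⊆ J → r.head ∈ J := by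
  constructor
  · intro h r hr hneg hpos
    exact h ⟨r.head, r.pos, ∅⟩ ⟨r, hr, hneg, rfl⟩ ⟨hpos, Set.empty_disjoint J⟩
  · rintro h _ ⟨r, hr, hneg, rfl⟩ ⟨hpos, -⟩
    exact h r hr hneg hpos

theorem satProg_reduct_self_iff : satProg I (reduct P I) ↔ satProg I P := by
  rw [satProg_reduct_iff]
  exact forall₂_congr fun _ _ =>
    ⟨fun h hbody => h hbody.2 hbody.1, fun h hneg hpos => h ⟨hpos, hneg⟩⟩

theorem disjoint_neg_inter_iff {r : Rule α} (hr : r ∈ P) (hA : atomsOf P ⊆ A) :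
    Disjoint r.neg (I ∩ A) ↔ Disjoint r.neg I := by
  rw [Set.disjoint_iff_inter_eq_empty, Set.disjoint_iff_inter_eq_empty, Set.inter_comm I A,
    ← Set.inter_assoc, Set.inter_eq_left.2 ((neg_subset_atomsOf hr).trans hA)]

theorem reduct_inter (hA : atomsOf P ⊆ A) : reduct P (I ∩ A) = reduct P I :=
  Set.ext fun _ => exists_congr fun _ => and_congr_right fun hr =>
    and_congr_left' (disjoint_neg_inter_iff hr hA)

theorem satProg_inter_iff (hA : atomsOf P ⊆ A) : satProg (I ∩ A) P ↔ satProg I P := by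
  refine forall₂_congr fun r hr => imp_congr (and_congr ?_ (disjoint_neg_inter_iff hr hA)) ?_
  · rw [Set.subset_inter_iff, and_iff_left ((pos_subset_atomsOf hr).trans hA)]
  · exact and_iff_left (hA (image_head_subset_atomsOf ⟨r, hr, rfl⟩))

theorem atomsOf_reduct_subset : atomsOf (reduct P I) ⊆ atomsOf P := by
  rintro a ⟨_, ⟨r, hr, -, rfl⟩, hhead | hpos | hneg⟩
  · exact ⟨r, hr, Or.inl hhead⟩
  · exact pos_subset_atomsOf hr hpos
  · exact hneg.elim

theorem satProg_reduct_inter_iff :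
    satProg (J ∩ atomsOf P) (reduct P I) ↔ satProg J (reduct P I) :=
  satProg_inter_iff atomsOf_reduct_subset

end Models

section StableModels

variable {α : Type*} {P Q : Set (Rule α)} {I : Set α}

theorem stable_iff_minimal : stable P I ↔ Minimal (fun J => satProg J (reduct P I)) I := by
  rw [minimal_iff_forall_lt, satProg_reduct_self_iff]
  rfl

theorem stable.subset_image_head (h : stable P I) : I ⊆ Rule.head '' P := by
  have hmin := stable_iff_minimal.1 h
  have hmodel : satProg (I ∩ Rule.head '' P) (reduct P I) :=
    satProg_reduct_iff.2 fun r hr hneg hpos =>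
      ⟨h.1 r hr ⟨hpos.trans Set.inter_subset_left, hneg⟩, r, hr, rfl⟩
  exact (hmin.le_of_le hmodel Set.inter_subset_left).trans Set.inter_subset_right

theorem stable.inter_atomsOf (h : stable (P ∪ Q) I)
    (hQP : Disjoint (Rule.head '' Q) (atomsOf P)) : stable P (I ∩ atomsOf P) := by
  obtain ⟨hIP, hIQ⟩ := satProg_union.1 h.1
  rw [stable_iff_minimal, reduct_inter subset_rfl]
  refine ⟨satProg_reduct_inter_iff.2 (satProg_reduct_self_iff.2 hIP), fun J hJ hJI => ?_⟩
  have hKI : J ∪ I \ atomsOf P ⊆ I :=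
    Set.union_subset (hJI.trans Set.inter_subset_left) Set.sdiff_subset
  have hKJ : (J ∪ I \ atomsOf P) ∩ atomsOf P = J := by
    rw [Set.union_inter_distrib_right, Set.sdiff_inter_self, Set.union_empty,
      Set.inter_eq_left.2 (hJI.trans Set.inter_subset_right)]
  have hKP : satProg (J ∪ I \ atomsOf P) (reduct P I) := by
    rwa [← satProg_reduct_inter_iff, hKJ]
  have hKQ : satProg (J ∪ I \ atomsOf P) (reduct Q I) :=
    satProg_reduct_iff.2 fun r hr hneg hpos =>
      Or.inr ⟨hIQ r hr ⟨hpos.trans hKI, hneg⟩, Set.disjoint_left.1 hQP ⟨r, hr, rfl⟩⟩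
  have hIK : I ⊆ J ∪ I \ atomsOf P :=
    (stable_iff_minimal.1 h).le_of_le (reduct_union ▸ satProg_union.2 ⟨hKP, hKQ⟩) hKI
  calc I ∩ atomsOf P ⊆ (J ∪ I \ atomsOf P) ∩ atomsOf P := Set.inter_subset_inter_left _ hIK
    _ = J := hKJ

theorem stable.inter_atomsOf_subset {J : Set α} (h : stable P (I ∩ atomsOf P)) (hJI : J ⊆ I)
    (hJ : satProg J (reduct P I)) : I ∩ atomsOf P ⊆ J := by
  rw [stable_iff_minimal, reduct_inter subset_rfl] at h
  exact (h.le_of_le (satProg_reduct_inter_iff.2 hJ) (Set.inter_subset_inter_left _ hJI)).trans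
    Set.inter_subset_left

theorem stable_union_of_inter_atomsOf (hP : stable P (I ∩ atomsOf P))
    (hQ : stable Q (I ∩ atomsOf Q)) (hI : I ⊆ atomsOf P ∪ atomsOf Q) : stable (P ∪ Q) I := by
  have hmodel : satProg I (P ∪ Q) :=
    satProg_union.2 ⟨(satProg_inter_iff subset_rfl).1 hP.1, (satProg_inter_iff subset_rfl).1 hQ.1⟩
  refine stable_iff_minimal.2 ⟨satProg_reduct_self_iff.2 hmodel, fun J hJ hJI => ?_⟩
  obtain ⟨hJP, hJQ⟩ := satProg_union.1 (reduct_union ▸ hJ)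
  calc I = I ∩ atomsOf P ∪ I ∩ atomsOf Q := by
        rw [← Set.inter_union_distrib_left, Set.inter_eq_left.2 hI]
    _ ⊆ J := Set.union_subset (hP.inter_atomsOf_subset hJI hJP) (hQ.inter_atomsOf_subset hJI hJQ)

end StableModels

theorem splitting_disjoint_general {α : Type*} (P₁ P₂ : Set (Rule α)) (I : Set α)
    (h₁₂ : Disjoint (Rule.head '' P₁) (atomsOf P₂))
    (h₂₁ : Disjoint (Rule.head '' P₂) (atomsOf P₁)) :
    stable (P₁ ∪ P₂) I ↔
      (stable P₁ (I ∩ atomsOf P₁) ∧ stable P₂ (I ∩ atomsOf P₂) ∧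
       I ⊆ atomsOf P₁ ∪ atomsOf P₂) := by
  constructor
  · intro h
    refine ⟨h.inter_atomsOf h₂₁, (Set.union_comm P₁ P₂ ▸ h).inter_atomsOf h₁₂, ?_⟩
    calc I ⊆ Rule.head '' (P₁ ∪ P₂) := h.subset_image_head
      _ = Rule.head '' P₁ ∪ Rule.head '' P₂ := Set.image_union ..
      _ ⊆ atomsOf P₁ ∪ atomsOf P₂ :=
        Set.union_subset_union image_head_subset_atomsOf image_head_subset_atomsOf
  · rintro ⟨h₁, h₂, hI⟩
    exact stable_union_of_inter_atomsOf h₁ h₂ hI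

theorem splitting_disjoint {α : Type*} (P₁ P₂ : Set (Rule α)) (I : Set α)
    (hdisj : Disjoint (atomsOf P₁) (atomsOf P₂)) :
    stable (P₁ ∪ P₂) I ↔
      (stable P₁ (I ∩ atomsOf P₁) ∧ stable P₂ (I ∩ atomsOf P₂) ∧
       I ⊆ atomsOf P₁ ∪ atomsOf P₂) :=
  splitting_disjoint_general P₁ P₂ I (hdisj.mono_left image_head_subset_atomsOf)
    (hdisj.symm.mono_left image_head_subset_atomsOf)
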